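/- Let k ≥ 2 and j ∈ {1,…,k−1}, and set p̄_j := ((j+1)·log n + (1/2)·log log n)·(k−j)!/((k−j+1)·n^{k−j}). With high probability, for all p ≥ p̄_j simultaneously, every local obstacle that exists in G_p also exists in G_{p̄_j}: every k-simplex K of G_p that is a local obstacle in G_p is a k-simplex of G_{p̄_j} and is a local obstacle in G_{p̄_j}. -/

import Mathlib

open MeasureTheory Filter

attribute [local instance] Classical.propDecidable

namespace RSC

variable {V : Type*}

/-- `A` is an `i`-dimensional simplex of the complex `G`. -/
def IsSimplex (G : Set (Finset V)) (i : ℕ) (A : Finset V) : Prop :=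
  A ∈ G ∧ A.card = i + 1

/-- A `k`-dimensional simplicial complex on vertex set `V`. -/
structure IsKComplex (G : Set (Finset V)) (k : ℕ) : Prop where
  down : ∀ A ∈ G, ∀ B, B ⊆ A → B.Nonempty → B ∈ G
  singletons : ∀ v : V, ({v} : Finset V) ∈ G
  dim : ∀ A ∈ G, A.card ≤ k + 1

/-- `i`-cochains with `F₂`-coefficients. -/
abbrev Cochain (G : Set (Finset V)) (i : ℕ) : Type _ :=
  {A : Finset V // IsSimplex G i A} → ZMod 2

/-- The coboundary map `δ^i : C^i(G) → C^{i+1}(G)`. -/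
noncomputable def coboundary (G : Set (Finset V)) (i : ℕ) :
    Cochain G i →ₗ[ZMod 2] Cochain G (i + 1) where
  toFun f := fun σ => ∑ τ ∈ Finset.powersetCard (i + 1) (σ : Finset V),
      if h : IsSimplex G i τ then f ⟨τ, h⟩ else 0
  map_add' f g := by
    funext σ
    simp only [Pi.add_apply, ← Finset.sum_add_distrib]
    refine Finset.sum_congr rfl fun τ _ => ?_
    by_cases h : IsSimplex G i τ <;> simp [h]
  map_smul' c f := by
    funext σ
    simp only [Pi.smul_apply, RingHom.id_apply, Finset.smul_sum]
    refine Finset.sum_congr rfl fun τ _ => ?_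
    by_cases h : IsSimplex G i τ <;> simp [h]

/-- The submodule of `i`-cocycles. -/
noncomputable def cocycles (G : Set (Finset V)) (i : ℕ) : Submodule (ZMod 2) (Cochain G i) :=
  LinearMap.ker (coboundary G i)

/-- The submodule of `i`-coboundaries (`δ^{-1}` is the zero map). -/
noncomputable def coboundaries (G : Set (Finset V)) : (i : ℕ) → Submodule (ZMod 2) (Cochain G i)
  | 0 => ⊥
  | (i + 1) => LinearMap.range (coboundary G i)

/-- The `i`-th cohomology group `H^i(G;F₂) = ker δ^i / im δ^{i-1}`. -/
noncomputable abbrev cohomology (G : Set (Finset V)) (i : ℕ) :=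
  (cocycles G i) ⧸ ((coboundaries G i).comap (cocycles G i).subtype)

/-- `F₂`-cohomological `j`-connectedness: `H^0 ≅ F₂` and `H^i = 0` for `1 ≤ i ≤ j`. -/
def CohomConnected (G : Set (Finset V)) (j : ℕ) : Prop :=
  Nonempty (cohomology G 0 ≃ₗ[ZMod 2] ZMod 2) ∧
    ∀ i, 1 ≤ i → i ≤ j → Subsingleton (cohomology G i)

/-- The `j`-flower in `K` with centre `C`: the set of petals `C ∪ {w}`, `w ∈ K \ C`. -/
def Flower [DecidableEq V] (K C : Finset V) : Set (Finset V) :=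
  {P | ∃ w ∈ K \ C, P = insert w C}

/-- A copy of `M_j^-`: a `k`-simplex `K` together with a `(j-1)`-simplex `C ⊆ K` such that
each petal of the flower `F(K,C)` is contained in no `k`-simplex other than `K`. -/
def IsMjMinus [DecidableEq V] (G : Set (Finset V)) (k j : ℕ) (K C : Finset V) : Prop :=
  IsSimplex G k K ∧ C ∈ G ∧ C.card = j ∧ C ⊆ K ∧
    ∀ P ∈ Flower K C, ∀ K', IsSimplex G k K' → P ⊆ K' → K' = K

/-- A `j`-cycle: every `(j-1)`-simplex lies in an even number of members of `J`. -/
def IsCycle (G : Set (Finset V)) (j : ℕ) (J : Finset (Finset V)) : Prop :=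
  (∀ σ ∈ J, IsSimplex G j σ) ∧
    ∀ τ : Finset V, τ.card = j → Even (J.filter (fun σ => τ ⊆ σ)).card

/-- A copy of `M_j`. -/
def IsMj [DecidableEq V] (G : Set (Finset V)) (k j : ℕ) (K C : Finset V)
    (J : Finset (Finset V)) : Prop :=
  IsMjMinus G k j K C ∧ IsCycle G j J ∧ ∃! P : Finset V, P ∈ J ∧ P ∈ Flower K C

/-- A `j`-shell: a `(j+2)`-set all of whose `(j+1)`-subsets are `j`-simplices. -/
def IsShell (G : Set (Finset V)) (j : ℕ) (A : Finset V) : Prop :=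
  A.card = j + 2 ∧ ∀ τ ⊆ A, τ.card = j + 1 → τ ∈ G

/-- A copy of `M_j^*`. -/
def IsMjStar [DecidableEq V] (G : Set (Finset V)) (k j : ℕ) (K C : Finset V) (w a : V) : Prop :=
  IsMjMinus G k j K C ∧ w ∈ K \ C ∧ a ∉ K ∧ IsShell G j (insert a (insert w C))

/-- The support of a cochain. -/
def cochainSupport {G : Set (Finset V)} {i : ℕ} (f : Cochain G i) : Set (Finset V) :=
  {A | ∃ h : IsSimplex G i A, f ⟨A, h⟩ = 1}

/-- A cochain arising from a copy of `M_j^-`: its support is the flower `F(K,C)`. -/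
def ArisesFrom [DecidableEq V] (G : Set (Finset V)) (k j : ℕ) (f : Cochain G j)
    (K C : Finset V) : Prop :=
  IsMjMinus G k j K C ∧ cochainSupport f = Flower K C

/-- A `j`-cocycle generated by copies of `M_j^-`: it differs by a `j`-coboundary from a sum
of `j`-cocycles arising from copies of `M_j^-`. -/
def GeneratedByMjMinus [DecidableEq V] (G : Set (Finset V)) (k j : ℕ) (f : Cochain G j) : Prop :=
  ∃ (m : ℕ) (fs : Fin m → Cochain G j),
    (∀ i, ∃ K C, ArisesFrom G k j (fs i) K C) ∧
      f - (∑ i, fs i) ∈ coboundaries G j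

/-- Membership in `N_G`: a `j`-cocycle not generated by copies of `M_j^-`. -/
def InNG [DecidableEq V] (G : Set (Finset V)) (k j : ℕ) (f : Cochain G j) : Prop :=
  f ∈ cocycles G j ∧ ¬ GeneratedByMjMinus G k j f

/-- Traversability: the transitive closure of "lying in a common `k`-simplex" is `S × S`. -/
def Traversable (G : Set (Finset V)) (k : ℕ) (S : Set (Finset V)) : Prop :=
  ∀ σ₁ ∈ S, ∀ σ₂ ∈ S,
    Relation.TransGen
      (fun a b => a ∈ S ∧ b ∈ S ∧ ∃ K, IsSimplex G k K ∧ a ⊆ K ∧ b ⊆ K) σ₁ σ₂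

/-- A local obstacle: a `k`-simplex containing at least `k-j+1` many `j`-simplices,
each lying in no other `k`-simplex. -/
def IsLocalObstacle (G : Set (Finset V)) (k j : ℕ) (K : Finset V) : Prop :=
  IsSimplex G k K ∧
    k - j + 1 ≤ {σ : Finset V | IsSimplex G j σ ∧ σ ⊆ K ∧
      ∀ K', IsSimplex G k K' → σ ⊆ K' → K' = K}.ncard

/-- The random complex `G_p` given birth times `t`: all singletons together with all
non-empty subsets of `(k+1)`-sets with birth time at most `p`. -/
def complexAt (k n : ℕ) (t : Finset (Fin n) → ℝ) (p : ℝ) : Set (Finset (Fin n)) :=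
  {A | (∃ v, A = {v}) ∨
    (A.Nonempty ∧ ∃ K : Finset (Fin n), K.card = k + 1 ∧ t K ≤ p ∧ A ⊆ K)}

/-- The distribution of birth times: i.i.d. uniform on `[0,1]`. -/
noncomputable def birthMeasure (n : ℕ) : Measure (Finset (Fin n) → ℝ) :=
  Measure.pi fun _ => volume.restrict (Set.Icc (0 : ℝ) 1)

/-- `p_{M_j}`: the supremum of the probabilities `p ∈ [0,1]` at which `G_p` contains
a copy of `M_j`. -/
noncomputable def pMj (k j n : ℕ) (t : Finset (Fin n) → ℝ) : ℝ :=
  sSup {p : ℝ | p ∈ Set.Icc (0 : ℝ) 1 ∧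
    ∃ K C J, IsMj (complexAt k n t p) k j K C J}

/-- The threshold `p_j`. -/
noncomputable def pjThreshold (k j n : ℕ) : ℝ :=
  ((j + 1 : ℝ) * Real.log n + Real.log (Real.log n)) * (Nat.factorial (k - j)) /
    (((k - j + 1 : ℕ) : ℝ) * (n : ℝ) ^ (k - j))

/-- `p_j^-`. -/
noncomputable def pjMinus (k j n : ℕ) : ℝ :=
  (1 - 1 / Real.sqrt (Real.log n)) * ((j + 1 : ℝ) * Real.log n) * (Nat.factorial (k - j)) /
    (((k - j + 1 : ℕ) : ℝ) * (n : ℝ) ^ (k - j))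

/-- `p_{j-1}^-`. -/
noncomputable def pjPrevMinus (k j n : ℕ) : ℝ :=
  (1 - 1 / Real.sqrt (Real.log n)) * ((j : ℝ) * Real.log n) * (Nat.factorial (k - j + 1)) /
    (((k - j + 2 : ℕ) : ℝ) * (n : ℝ) ^ (k - j + 1))

/-- `p_j^{(1)}`. -/
noncomputable def pjOne (k j n : ℕ) : ℝ :=
  1 / (10 * ((j : ℝ) + 1) * (Nat.choose (k + 1) (j + 1)) * (n : ℝ) ^ (k - j))

/-- The number of copies of `M_j^-` in `G`. -/
noncomputable def countMjMinus (k j : ℕ) {n : ℕ} (G : Set (Finset (Fin n))) : ℕ :=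
  {x : Finset (Fin n) × Finset (Fin n) | IsMjMinus G k j x.1 x.2}.ncard

/-- The number of copies of `M_j^*` in `G`. -/
noncomputable def countMjStar (k j : ℕ) {n : ℕ} (G : Set (Finset (Fin n))) : ℕ :=
  {x : Finset (Fin n) × Finset (Fin n) × Fin n × Fin n |
    IsMjStar G k j x.1 x.2.1 x.2.2.1 x.2.2.2}.ncard

/-- `p̄_j = ((j+1)·log n + (1/2)·log log n)·(k-j)!/((k-j+1)·n^{k-j})`. -/
noncomputable def pbar (k j n : ℕ) : ℝ :=
  ((j + 1 : ℝ) * Real.log n + Real.log (Real.log n) / 2) * (Nat.factorial (k - j)) /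
    (((k - j + 1 : ℕ) : ℝ) * (n : ℝ) ^ (k - j))

/-!
If a local obstacle `K` appears after time `q`, then `K` itself is born after `q`, and `k - j + 1`
of its `j`-faces lie in no other `k`-simplex, so `K` is born before each of the
`N = (k - j + 1) * (n - k - 1).choose (k - j)` sets extending one of these faces by `k - j` vertices
outside `K`.
Hence `N + 1` independent uniform times all exceed `q` and a prescribed one of them is the
minimum: by symmetry this has probability at most `e^{-q(N+1)}/(N+1)`. The factor `1/(N+1)`, which
is of order `n^{-(k-j)}`, reduces the union bound over the `O(n^{k+1})` pairs of a `k`-simplex and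
a choice of faces to `O(n^{j+1} e^{-qN})`. At `q = p̄_j` the exponent `qN` exceeds `(j + 1) log n`
by an amount tending to infinity, and nothing else about `p̄_j` matters.
-/

theorem tendsto_measure_one_of_compl {ι : Type*} {l : Filter ι} {Ω : ι → Type*}
    [∀ i, MeasurableSpace (Ω i)] {μ : ∀ i, Measure (Ω i)} [∀ i, IsProbabilityMeasure (μ i)]
    {s : ∀ i, Set (Ω i)} (h : Tendsto (fun i ↦ μ i (s i)ᶜ) l (nhds 0)) :
    Tendsto (fun i ↦ μ i (s i)) l (nhds 1) := by
  have hsub : Tendsto (fun i ↦ 1 - μ i (s i)ᶜ) l (nhds 1) := by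
    simpa using ENNReal.Tendsto.sub tendsto_const_nhds h (.inl ENNReal.one_ne_top)
  refine tendsto_of_tendsto_of_tendsto_of_le_of_le hsub tendsto_const_nhds (fun i ↦ ?_)
    fun i ↦ prob_le_one
  rw [tsub_le_iff_right, ← measure_univ (μ := μ i)]
  exact measure_univ_le_add_compl (s i)

theorem measurePreserving_comp_perm {ι α : Type*} [Fintype ι] [MeasurableSpace α]
    (ν : Measure α) [SigmaFinite ν] (σ : Equiv.Perm ι) :
    MeasurePreserving (fun t : ι → α ↦ t ∘ σ) (Measure.pi fun _ ↦ ν) (Measure.pi fun _ ↦ ν) :=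
  measurePreserving_arrowCongr' (fun _ ↦ ν) (fun _ ↦ ν) σ.symm (MeasurableEquiv.refl α)
    fun _ ↦ MeasurePreserving.id ν

section MinimumOfIID

variable {ι α : Type*} [LinearOrder α]

/-- The event that the coordinate `i` exceeds `q` and is the strict minimum over the coordinates
in `S`. -/
def strictMinAbove (S : Finset ι) (q : α) (i : ι) : Set (ι → α) :=
  {t | q < t i ∧ ∀ l ∈ S, l ≠ i → t i < t l}

theorem pairwiseDisjoint_strictMinAbove (S : Finset ι) (q : α) :
    (S : Set ι).PairwiseDisjoint (strictMinAbove S q) := fun a ha b hb hab ↦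
  Set.disjoint_left.2 fun _ hta htb ↦ (hta.2 b hb hab.symm).asymm (htb.2 a ha hab)

theorem strictMinAbove_subset_pi (S : Finset ι) (q : α) (i : ι) :
    strictMinAbove S q i ⊆ (S : Set ι).pi fun _ ↦ Set.Ioi q := by
  rintro t ⟨hq, hmin⟩ l hl
  obtain rfl | hne := eq_or_ne l i
  · exact hq
  · exact hq.trans (hmin l hl hne)

theorem preimage_comp_strictMinAbove (S : Finset ι) (q : α) (i : ι) (σ : Equiv.Perm ι) :
    (fun t : ι → α ↦ t ∘ σ) ⁻¹' strictMinAbove S q i =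
      strictMinAbove (S.map σ.toEmbedding) q (σ i) := by
  ext t
  simp only [strictMinAbove, Set.mem_preimage, Set.mem_ofPred_eq, Function.comp_apply,
    Finset.forall_mem_map, Equiv.coe_toEmbedding, σ.injective.ne_iff]

variable [MeasurableSpace α] [TopologicalSpace α] [OrderClosedTopology α]
  [SecondCountableTopology α] [OpensMeasurableSpace α]

theorem measurableSet_strictMinAbove (S : Finset ι) (q : α) (i : ι) :
    MeasurableSet (strictMinAbove S q i) := by
  have hinter : strictMinAbove S q i =
      {t | q < t i} ∩ ⋂ l ∈ S, ⋂ (_ : l ≠ i), {t | t i < t l} := by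
    ext t
    simp [strictMinAbove]
  rw [hinter]
  exact (measurableSet_lt measurable_const (measurable_pi_apply i)).inter <|
    S.measurableSet_biInter fun l _ ↦ .iInter fun _ ↦
      measurableSet_lt (measurable_pi_apply i) (measurable_pi_apply l)

variable [Fintype ι]

theorem measure_strictMinAbove_eq (ν : Measure α) [SigmaFinite ν] {S : Finset ι} (q : α)
    {i a : ι} (hi : i ∈ S) (ha : a ∈ S) :
    Measure.pi (fun _ ↦ ν) (strictMinAbove S q a) =
      Measure.pi (fun _ ↦ ν) (strictMinAbove S q i) := by
  have hS : S.map (Equiv.swap i a).toEmbedding = S := Finset.map_perm fun b hb ↦ by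
    obtain ⟨-, rfl | rfl⟩ := Equiv.swap_apply_ne_self_iff.1 hb <;> assumption
  have hpre := (measurePreserving_comp_perm ν (Equiv.swap i a)).measure_preimage
    (measurableSet_strictMinAbove S q i).nullMeasurableSet
  rwa [preimage_comp_strictMinAbove, hS, Equiv.swap_apply_left] at hpre

theorem measure_strictMinAbove_le (ν : Measure α) [IsProbabilityMeasure ν] {S : Finset ι} (q : α)
    {i : ι} (hi : i ∈ S) :
    Measure.pi (fun _ ↦ ν) (strictMinAbove S q i) ≤ ν (Set.Ioi q) ^ S.card / S.card := by
  have hcard : (S.card : ENNReal) ≠ 0 := by exact_mod_cast Finset.card_ne_zero_of_mem hi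
  rw [ENNReal.le_div_iff_mul_le (.inl hcard) (.inl (ENNReal.natCast_ne_top _)), mul_comm]
  calc (S.card : ENNReal) * Measure.pi (fun _ ↦ ν) (strictMinAbove S q i)
      = ∑ a ∈ S, Measure.pi (fun _ ↦ ν) (strictMinAbove S q a) := by
        rw [Finset.sum_congr rfl fun a ha ↦ measure_strictMinAbove_eq ν q hi ha,
          Finset.sum_const, nsmul_eq_mul]
    _ = Measure.pi (fun _ ↦ ν) (⋃ a ∈ S, strictMinAbove S q a) :=
        (measure_biUnion_finset (pairwiseDisjoint_strictMinAbove S q) fun a _ ↦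
          measurableSet_strictMinAbove S q a).symm
    _ ≤ Measure.pi (fun _ ↦ ν) ((S : Set ι).pi fun _ ↦ Set.Ioi q) :=
        measure_mono <| Set.iUnion₂_subset fun a _ ↦ strictMinAbove_subset_pi S q a
    _ = ν (Set.Ioi q) ^ S.card := by
        rw [Measure.pi_pi_finset, Finset.prod_const]

end MinimumOfIID

instance : IsProbabilityMeasure (volume.restrict (Set.Icc (0 : ℝ) 1)) := ⟨by simp⟩

instance (n : ℕ) : IsProbabilityMeasure (birthMeasure n) := by
  unfold birthMeasure
  infer_instance

theorem restrict_Icc_Ioi_le_exp (q : ℝ) :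
    volume.restrict (Set.Icc (0 : ℝ) 1) (Set.Ioi q) ≤ ENNReal.ofReal (Real.exp (-q)) := by
  rw [Measure.restrict_apply measurableSet_Ioi]
  calc volume (Set.Ioi q ∩ Set.Icc 0 1)
      ≤ volume (Set.Ioc q 1) := measure_mono fun _ hx ↦ ⟨hx.1, hx.2.2⟩
    _ = ENNReal.ofReal (1 - q) := Real.volume_Ioc
    _ ≤ ENNReal.ofReal (Real.exp (-q)) := ENNReal.ofReal_le_ofReal (Real.one_sub_le_exp_neg q)

theorem birthMeasure_strictMinAbove_le {n : ℕ} {S : Finset (Finset (Fin n))} (q : ℝ)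
    {K : Finset (Fin n)} (hK : K ∈ S) :
    birthMeasure n (strictMinAbove S q K) ≤
      ENNReal.ofReal (Real.exp (-(q * S.card)) / S.card) := by
  have hcard : (0 : ℝ) < S.card := by exact_mod_cast Finset.card_pos.2 ⟨K, hK⟩
  calc birthMeasure n (strictMinAbove S q K)
      ≤ volume.restrict (Set.Icc (0 : ℝ) 1) (Set.Ioi q) ^ S.card / S.card :=
        measure_strictMinAbove_le _ q hK
    _ ≤ ENNReal.ofReal (Real.exp (-q)) ^ S.card / S.card := by
        gcongr
        exact restrict_Icc_Ioi_le_exp q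
    _ = ENNReal.ofReal (Real.exp (-(q * S.card)) / S.card) := by
        rw [← ENNReal.ofReal_pow (Real.exp_pos _).le, ← Real.exp_nat_mul,
          ENNReal.ofReal_div_of_pos hcard, ENNReal.ofReal_natCast, mul_neg, mul_comm q]

section OuterExtensions

variable [Fintype V] [DecidableEq V]

/-- The sets `σ ∪ A` with `σ ∈ F` and `A` a `d`-set disjoint from `K`. When `F` consists of
`j`-faces of a `k`-simplex `K` and `d = k - j`, these are the potential `k`-simplices that meet `K`
exactly in a member of `F`. -/
noncomputable def outerExtensions (d : ℕ) (K : Finset V) (F : Finset (Finset V)) :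
    Finset (Finset V) :=
  (F ×ˢ Kᶜ.powersetCard d).image fun x ↦ x.1 ∪ x.2

theorem mem_outerExtensions {d : ℕ} {K L : Finset V} {F : Finset (Finset V)} :
    L ∈ outerExtensions d K F ↔ ∃ σ ∈ F, ∃ A, Disjoint A K ∧ A.card = d ∧ σ ∪ A = L := by
  simp [outerExtensions, Finset.mem_powersetCard, Finset.subset_compl_iff_disjoint_right,
    and_assoc]

theorem card_outerExtensions (d : ℕ) {K : Finset V} {F : Finset (Finset V)}
    (hF : ∀ σ ∈ F, σ ⊆ K) :
    (outerExtensions d K F).card = F.card * (Fintype.card V - K.card).choose d := by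
  rw [outerExtensions, Finset.card_image_of_injOn, Finset.card_product, Finset.card_powersetCard,
    Finset.card_compl]
  have hrecover : Set.LeftInvOn (fun L ↦ (L ∩ K, L \ K)) (fun x : Finset V × Finset V ↦ x.1 ∪ x.2)
      (F ×ˢ Kᶜ.powersetCard d : Finset (Finset V × Finset V)) := by
    rintro ⟨σ, A⟩ hx
    obtain ⟨hσ, hA⟩ := Finset.mem_product.1 (Finset.mem_coe.1 hx)
    have hAK : Disjoint A K :=
      Finset.subset_compl_iff_disjoint_right.1 (Finset.mem_powersetCard.1 hA).1
    simp [Finset.union_inter_distrib_right, Finset.union_sdiff_distrib,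
      Finset.inter_eq_left.2 (hF σ hσ), Finset.sdiff_eq_empty_iff_subset.2 (hF σ hσ),
      Finset.disjoint_iff_inter_eq_empty.1 hAK, hAK.sdiff_eq_left]
  exact hrecover.injOn

theorem notMem_outerExtensions {d : ℕ} (hd : 0 < d) (K : Finset V) (F : Finset (Finset V)) :
    K ∉ outerExtensions d K F := by
  rw [mem_outerExtensions]
  rintro ⟨σ, -, A, hAK, hA, hK⟩
  obtain ⟨x, hx⟩ : A.Nonempty := Finset.card_pos.1 (hA ▸ hd)
  exact Finset.disjoint_left.1 hAK hx (hK ▸ Finset.mem_union_right σ hx)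

end OuterExtensions

section LocalObstacles

variable {k j n : ℕ} {t : Finset (Fin n) → ℝ} {p q : ℝ} {K : Finset (Fin n)}

/-- The `j`-simplices of `G` contained in `K` and in no `k`-simplex other than `K`: a local
obstacle is a `k`-simplex with at least `k - j + 1` of them. -/
def exclusiveFaces (G : Set (Finset V)) (k j : ℕ) (K : Finset V) : Set (Finset V) :=
  {σ | IsSimplex G j σ ∧ σ ⊆ K ∧ ∀ K', IsSimplex G k K' → σ ⊆ K' → K' = K}

theorem isSimplex_complexAt_iff (hk : 0 < k) :
    IsSimplex (complexAt k n t p) k K ↔ K.card = k + 1 ∧ t K ≤ p := by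
  constructor
  · rintro ⟨⟨v, rfl⟩ | ⟨-, L, hL, hLp, hKL⟩, hK⟩
    · rw [Finset.card_singleton] at hK
      omega
    · obtain rfl := Finset.eq_of_subset_of_card_le hKL (by omega)
      exact ⟨hK, hLp⟩
  · rintro ⟨hK, hKp⟩
    exact ⟨.inr ⟨Finset.card_pos.1 (by omega), K, hK, hKp, subset_rfl⟩, hK⟩

theorem exclusiveFaces_complexAt_subset (hk : 0 < k) (hqp : q ≤ p) (hK : K.card = k + 1)
    (hKq : t K ≤ q) :
    exclusiveFaces (complexAt k n t p) k j K ⊆ exclusiveFaces (complexAt k n t q) k j K := by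
  rintro σ ⟨hσ, hσK, hunique⟩
  have hσne : σ.Nonempty := Finset.card_pos.1 (by rw [hσ.2]; omega)
  refine ⟨⟨.inr ⟨hσne, K, hK, hKq, hσK⟩, hσ.2⟩, hσK, fun K' hK' ↦ hunique K' ?_⟩
  rw [isSimplex_complexAt_iff hk] at hK' ⊢
  exact ⟨hK'.1, hK'.2.trans hqp⟩

theorem IsLocalObstacle.of_birth_le (hk : 0 < k) (hqp : q ≤ p) (hKq : t K ≤ q)
    (h : IsLocalObstacle (complexAt k n t p) k j K) :
    IsLocalObstacle (complexAt k n t q) k j K :=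
  ⟨(isSimplex_complexAt_iff hk).2 ⟨h.1.2, hKq⟩, h.2.trans <|
    Set.ncard_le_ncard (exclusiveFaces_complexAt_subset hk hqp h.1.2 hKq) (Set.toFinite _)⟩

theorem birth_lt_of_mem_outerExtensions (hjk : j < k) {F : Finset (Finset (Fin n))}
    (hKp : t K ≤ p) (hF : ∀ σ ∈ F, σ ∈ exclusiveFaces (complexAt k n t p) k j K)
    {L : Finset (Fin n)} (hL : L ∈ outerExtensions (k - j) K F) : t K < t L := by
  by_contra! hLK
  obtain ⟨σ, hσF, A, hAK, hA, rfl⟩ := mem_outerExtensions.1 hL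
  obtain ⟨hσ, hσK, hunique⟩ := hF σ hσF
  have hcard : (σ ∪ A).card = k + 1 := by
    rw [Finset.card_union_of_disjoint (hAK.symm.mono_left hσK), hσ.2, hA]
    omega
  have hsimplex : IsSimplex (complexAt k n t p) k (σ ∪ A) :=
    (isSimplex_complexAt_iff (by omega)).2 ⟨hcard, hLK.trans hKp⟩
  refine notMem_outerExtensions (Nat.sub_pos_of_lt hjk) K F ?_
  rwa [hunique _ hsimplex Finset.subset_union_left] at hL

theorem IsLocalObstacle.exists_birth_lt_outerExtensions (hjk : j < k)
    (h : IsLocalObstacle (complexAt k n t p) k j K) :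
    ∃ F ∈ (K.powersetCard (j + 1)).powersetCard (k - j + 1),
      ∀ L ∈ outerExtensions (k - j) K F, t K < t L := by
  have hKp : t K ≤ p := ((isSimplex_complexAt_iff (by omega)).1 h.1).2
  have hmany : k - j + 1 ≤ (exclusiveFaces (complexAt k n t p) k j K).toFinset.card := by
    rw [← Set.ncard_eq_toFinset_card']
    exact h.2
  obtain ⟨F, hFsub, hFcard⟩ := Finset.exists_subset_card_eq hmany
  have hF : ∀ σ ∈ F, σ ∈ exclusiveFaces (complexAt k n t p) k j K :=
    fun σ hσ ↦ Set.mem_toFinset.1 (hFsub hσ)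
  refine ⟨F, Finset.mem_powersetCard.2 ⟨fun σ hσ ↦ ?_, hFcard⟩,
    fun L ↦ birth_lt_of_mem_outerExtensions hjk hKp hF⟩
  exact Finset.mem_powersetCard.2 ⟨(hF σ hσ).2.1, (hF σ hσ).1.2⟩

/-- The event that no local obstacle appears after time `q`. -/
def noNewObstacle (k j n : ℕ) (q : ℝ) : Set (Finset (Fin n) → ℝ) :=
  {t | ∀ p, q ≤ p → ∀ K, IsLocalObstacle (complexAt k n t p) k j K →
    IsLocalObstacle (complexAt k n t q) k j K}

end LocalObstacles

section UnionBound

/-- The pairs of a potential `k`-simplex `K` and a choice of `k - j + 1` of its `j`-faces. -/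
def obstacleCandidates (k j n : ℕ) : Finset (Σ _ : Finset (Fin n), Finset (Finset (Fin n))) :=
  (Finset.univ.powersetCard (k + 1)).sigma fun K ↦
    (K.powersetCard (j + 1)).powersetCard (k - j + 1)

/-- The number of outer extensions of `k - j + 1` given `j`-faces of a `k`-simplex. -/
def extensionCount (k j n : ℕ) : ℕ := (k - j + 1) * (n - (k + 1)).choose (k - j)

variable {k j n : ℕ}

theorem card_obstacleCandidates :
    (obstacleCandidates k j n).card =
      n.choose (k + 1) * ((k + 1).choose (j + 1)).choose (k - j + 1) := by
  rw [obstacleCandidates, Finset.card_sigma, Finset.sum_const_nat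
    (m := ((k + 1).choose (j + 1)).choose (k - j + 1)), Finset.card_powersetCard,
    Finset.card_univ, Fintype.card_fin]
  intro K hK
  rw [Finset.card_powersetCard, Finset.card_powersetCard, (Finset.mem_powersetCard.1 hK).2]

theorem card_insert_outerExtensions (hjk : j < k) {K : Finset (Fin n)}
    {F : Finset (Finset (Fin n))} (hKF : ⟨K, F⟩ ∈ obstacleCandidates k j n) :
    (insert K (outerExtensions (k - j) K F)).card = extensionCount k j n + 1 := by
  obtain ⟨hK, hF⟩ := Finset.mem_sigma.1 hKF
  obtain ⟨hFK, hFcard⟩ := Finset.mem_powersetCard.1 hF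
  rw [Finset.card_insert_of_notMem (notMem_outerExtensions (Nat.sub_pos_of_lt hjk) K F),
    card_outerExtensions _ fun σ hσ ↦ (Finset.mem_powersetCard.1 (hFK hσ)).1, hFcard,
    (Finset.mem_powersetCard.1 hK).2, Fintype.card_fin, extensionCount]

theorem compl_noNewObstacle_subset (hjk : j < k) (q : ℝ) :
    (noNewObstacle k j n q)ᶜ ⊆ ⋃ x ∈ obstacleCandidates k j n,
      strictMinAbove (insert x.1 (outerExtensions (k - j) x.1 x.2)) q x.1 := by
  intro t ht
  simp only [noNewObstacle, Set.mem_compl_iff, Set.mem_ofPred_eq, not_forall] at ht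
  obtain ⟨p, hqp, K, hp, hq⟩ := ht
  have hqK : q < t K := lt_of_not_ge fun hKq ↦ hq (hp.of_birth_le (by omega) hqp hKq)
  obtain ⟨F, hF, hlt⟩ := hp.exists_birth_lt_outerExtensions hjk
  have hK : K ∈ Finset.univ.powersetCard (k + 1) :=
    Finset.mem_powersetCard.2 ⟨K.subset_univ, hp.1.2⟩
  simp only [Set.mem_iUnion]
  exact ⟨⟨K, F⟩, Finset.mem_sigma.2 ⟨hK, hF⟩, hqK,
    fun L hL hLK ↦ hlt L (Finset.mem_of_mem_insert_of_ne hL hLK)⟩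

theorem birthMeasure_compl_noNewObstacle_le (hjk : j < k) (q : ℝ) :
    birthMeasure n (noNewObstacle k j n q)ᶜ ≤
      ENNReal.ofReal ((n : ℝ) ^ (k + 1) * ((k + 1).choose (j + 1)).choose (k - j + 1) *
        (Real.exp (-(q * (extensionCount k j n + 1))) / (extensionCount k j n + 1))) := by
  set b : ℝ := Real.exp (-(q * (extensionCount k j n + 1))) / (extensionCount k j n + 1)
  calc birthMeasure n (noNewObstacle k j n q)ᶜ
      ≤ ∑ x ∈ obstacleCandidates k j n,
          birthMeasure n (strictMinAbove (insert x.1 (outerExtensions (k - j) x.1 x.2)) q x.1) :=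
        (measure_mono (compl_noNewObstacle_subset hjk q)).trans (measure_biUnion_finset_le _ _)
    _ ≤ (obstacleCandidates k j n).card • ENNReal.ofReal b := by
        refine Finset.sum_le_card_nsmul _ _ _ fun x hx ↦ ?_
        have hmin := birthMeasure_strictMinAbove_le q
          (Finset.mem_insert_self x.1 (outerExtensions (k - j) x.1 x.2))
        rwa [card_insert_outerExtensions hjk hx, Nat.cast_add_one] at hmin
    _ = ENNReal.ofReal ((obstacleCandidates k j n).card * b) := by
        rw [← ENNReal.ofReal_nsmul, nsmul_eq_mul]
    _ ≤ ENNReal.ofReal ((n : ℝ) ^ (k + 1) * ((k + 1).choose (j + 1)).choose (k - j + 1) * b) := by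
        rw [card_obstacleCandidates, Nat.cast_mul]
        gcongr
        exact_mod_cast Nat.choose_le_pow n (k + 1)

end UnionBound

section Asymptotics

/-- The time `((j+1)·log n + x)·(k-j)!/((k-j+1)·n^{k-j})`, after which, for bounded `x`, the
expected number of new local obstacles is `O(e^{-x})`; `p̄_j` is the case `x = (log log n)/2`. -/
noncomputable def obstacleThreshold (k j n : ℕ) (x : ℝ) : ℝ :=
  ((j + 1 : ℝ) * Real.log n + x) * (Nat.factorial (k - j)) /
    (((k - j + 1 : ℕ) : ℝ) * (n : ℝ) ^ (k - j))

theorem one_sub_le_factorial_mul_choose_div_pow {n m d : ℕ} (hn : 0 < n) (hmd : m + d ≤ n) :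
    1 - ((d * (m + d) : ℕ) : ℝ) / n ≤ d.factorial * (n - m).choose d / (n : ℝ) ^ d := by
  have hn' : (0 : ℝ) < n := by exact_mod_cast hn
  have hle : ((m + d : ℕ) : ℝ) / n ≤ 1 := (div_le_one hn').2 (by exact_mod_cast hmd)
  calc 1 - ((d * (m + d) : ℕ) : ℝ) / n
      = 1 + d * (-(((m + d : ℕ) : ℝ) / n)) := by push_cast; ring
    _ ≤ (1 + -(((m + d : ℕ) : ℝ) / n)) ^ d := one_add_mul_le_pow (by linarith) d
    _ = ((n - (m + d) : ℕ) : ℝ) ^ d / (n : ℝ) ^ d := by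
        rw [← div_pow, Nat.cast_sub hmd, sub_div, div_self hn'.ne', sub_eq_add_neg]
    _ ≤ d.factorial * (n - m).choose d / (n : ℝ) ^ d := by
        gcongr
        have hbase : n - (m + d) ≤ n - m + 1 - d := by omega
        calc ((n - (m + d) : ℕ) : ℝ) ^ d
            ≤ ((n - m + 1 - d : ℕ) : ℝ) ^ d := by exact_mod_cast Nat.pow_le_pow_left hbase d
          _ ≤ d.factorial * (n - m).choose d :=
              (div_le_iff₀' (by positivity)).1 (Nat.pow_le_choose d (n - m))

variable {k j n : ℕ} {x : ℝ}

theorem obstacleThreshold_nonneg (hx : 0 ≤ x) : 0 ≤ obstacleThreshold k j n x := by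
  unfold obstacleThreshold
  positivity

theorem obstacleThreshold_mul_extensionCount :
    obstacleThreshold k j n x * extensionCount k j n =
      ((j + 1) * Real.log n + x) *
        ((k - j).factorial * (n - (k + 1)).choose (k - j) / (n : ℝ) ^ (k - j)) := by
  rw [obstacleThreshold, extensionCount, Nat.cast_mul]
  field_simp

theorem pow_le_two_mul_factorial_mul_extensionCount (hkn : k + 1 + (k - j) ≤ n)
    (hhalf : (((k - j) * (k + 1 + (k - j)) : ℕ) : ℝ) / n ≤ 1 / 2) :
    (n : ℝ) ^ (k - j) ≤ 2 * (k - j).factorial * extensionCount k j n := by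
  have hn : 0 < n := by omega
  have hratio := one_sub_le_factorial_mul_choose_div_pow hn hkn
  have hchoose : 1 / 2 * (n : ℝ) ^ (k - j) ≤
      (k - j).factorial * (n - (k + 1)).choose (k - j) :=
    (le_div_iff₀ (by positivity)).1 (by linarith)
  have hle : (((n - (k + 1)).choose (k - j) : ℕ) : ℝ) ≤ extensionCount k j n := by
    exact_mod_cast Nat.le_mul_of_pos_left _ (Nat.succ_pos _)
  calc (n : ℝ) ^ (k - j) ≤ 2 * ((k - j).factorial * (n - (k + 1)).choose (k - j)) := by linarith
    _ ≤ 2 * (k - j).factorial * extensionCount k j n := by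
        rw [← mul_assoc]
        gcongr

theorem pow_mul_exp_neg_obstacleThreshold_le (hkn : k + 1 + (k - j) ≤ n)
    (hhalf : (((k - j) * (k + 1 + (k - j)) : ℕ) : ℝ) / n ≤ 1 / 2) (hx : 0 ≤ x) :
    (n : ℝ) ^ (j + 1) * Real.exp (-(obstacleThreshold k j n x * extensionCount k j n)) ≤
      Real.exp ((j + 1) * ((k - j) * (k + 1 + (k - j)) : ℕ)) * Real.exp (-(x / 2)) := by
  have hn : 0 < n := by omega
  have hn' : (0 : ℝ) < n := by exact_mod_cast hn
  have hratio := one_sub_le_factorial_mul_choose_div_pow hn hkn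
  set D : ℝ := (((k - j) * (k + 1 + (k - j)) : ℕ) : ℝ)
  have hlogD : Real.log n * (D / n) ≤ D := by
    rw [mul_div_left_comm]
    exact mul_le_of_le_one_right (Nat.cast_nonneg _)
      ((div_le_one hn').2 (Real.log_le_self hn'.le))
  have hpow : (n : ℝ) ^ (j + 1) = Real.exp ((j + 1) * Real.log n) := by
    rw [← Nat.cast_add_one, Real.exp_nat_mul, Real.exp_log hn']
  have hexponent : ((j + 1) * Real.log n + x) * (1 - D / n) ≤
      obstacleThreshold k j n x * extensionCount k j n := by
    rw [obstacleThreshold_mul_extensionCount]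
    gcongr
  rw [hpow, ← Real.exp_add, ← Real.exp_add, Real.exp_le_exp]
  calc (j + 1) * Real.log n + -(obstacleThreshold k j n x * extensionCount k j n)
      ≤ (j + 1) * Real.log n - ((j + 1) * Real.log n + x) * (1 - D / n) := by linarith
    _ = (j + 1) * (Real.log n * (D / n)) - x * (1 - D / n) := by ring
    _ ≤ (j + 1) * D - x * (1 - 1 / 2) := by gcongr
    _ = (j + 1) * D + -(x / 2) := by ring

theorem exists_birthMeasure_compl_noNewObstacle_le (hjk : j < k) :
    ∃ c : ℝ, ∀ᶠ n : ℕ in atTop, ∀ x, 0 ≤ x →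
      birthMeasure n (noNewObstacle k j n (obstacleThreshold k j n x))ᶜ ≤
        ENNReal.ofReal (c * Real.exp (-(x / 2))) := by
  set M : ℝ := ((((k + 1).choose (j + 1)).choose (k - j + 1) : ℕ) : ℝ)
  set E : ℝ := Real.exp ((j + 1) * ((k - j) * (k + 1 + (k - j)) : ℕ))
  refine ⟨2 * (k - j).factorial * M * E, ?_⟩
  have hsmall := tendsto_const_div_atTop_nhds_zero_nat
    (((k - j) * (k + 1 + (k - j)) : ℕ) : ℝ)
  filter_upwards [eventually_ge_atTop (k + 1 + (k - j)),
    hsmall.eventually_le_const one_half_pos] with n hkn hhalf x hx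
  refine (birthMeasure_compl_noNewObstacle_le hjk _).trans (ENNReal.ofReal_le_ofReal ?_)
  set N : ℝ := (extensionCount k j n : ℝ)
  set q := obstacleThreshold k j n x
  have hq : 0 ≤ q := obstacleThreshold_nonneg hx
  have hchoices : (n : ℝ) ^ (k - j) / (N + 1) ≤ 2 * (k - j).factorial := by
    rw [div_le_iff₀ (Nat.cast_add_one_pos _)]
    refine (pow_le_two_mul_factorial_mul_extensionCount hkn hhalf).trans ?_
    gcongr
    linarith
  have hdecay : (n : ℝ) ^ (j + 1) * Real.exp (-(q * (N + 1))) ≤ E * Real.exp (-(x / 2)) := by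
    refine le_trans ?_ (pow_mul_exp_neg_obstacleThreshold_le hkn hhalf hx)
    gcongr
    linarith
  calc (n : ℝ) ^ (k + 1) * M * (Real.exp (-(q * (N + 1))) / (N + 1))
      = M * ((n : ℝ) ^ (k - j) / (N + 1)) *
          ((n : ℝ) ^ (j + 1) * Real.exp (-(q * (N + 1)))) := by
        rw [show k + 1 = k - j + (j + 1) by omega, pow_add]
        ring
    _ ≤ M * (2 * (k - j).factorial) * (E * Real.exp (-(x / 2))) := by gcongr
    _ = 2 * (k - j).factorial * M * E * Real.exp (-(x / 2)) := by ring

end Asymptotics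

theorem statement11_general (k j : ℕ) (hjk : j < k) {ω : ℕ → ℝ} (hω : Tendsto ω atTop atTop) :
    Tendsto (fun n : ℕ => birthMeasure n {t : Finset (Fin n) → ℝ |
      ∀ p : ℝ, obstacleThreshold k j n (ω n) ≤ p →
        ∀ K : Finset (Fin n), IsLocalObstacle (complexAt k n t p) k j K →
          IsLocalObstacle (complexAt k n t (obstacleThreshold k j n (ω n))) k j K})
      atTop (nhds 1) := by
  obtain ⟨c, hc⟩ := exists_birthMeasure_compl_noNewObstacle_le hjk
  have hbound : Tendsto (fun n ↦ ENNReal.ofReal (c * Real.exp (-(ω n / 2)))) atTop (nhds 0) := by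
    have hexp := Real.tendsto_exp_neg_atTop_nhds_zero.comp (hω.atTop_div_const two_pos)
    simpa using ENNReal.tendsto_ofReal (hexp.const_mul c)
  refine tendsto_measure_one_of_compl
    (s := fun n ↦ noNewObstacle k j n (obstacleThreshold k j n (ω n))) ?_
  refine tendsto_of_tendsto_of_tendsto_of_le_of_le' tendsto_const_nhds hbound
    (.of_forall fun _ ↦ zero_le) ?_
  filter_upwards [hc, hω.eventually_ge_atTop 0] with n hn hωn using hn (ω n) hωn

/-- Lemma 4.5: whp, for all `p ≥ p̄_j` simultaneously, every local obstacle of `G_p`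
is already a local obstacle of `G_{p̄_j}`. -/
theorem statement11 (k j : ℕ) (hk : 2 ≤ k) (hj : 1 ≤ j) (hjk : j < k) :
    Tendsto (fun n : ℕ => birthMeasure n {t : Finset (Fin n) → ℝ |
      ∀ p : ℝ, pbar k j n ≤ p →
        ∀ K : Finset (Fin n), IsLocalObstacle (complexAt k n t p) k j K →
          IsLocalObstacle (complexAt k n t (pbar k j n)) k j K})
      atTop (nhds 1) :=
  statement11_general k j hjk <| (Real.tendsto_log_atTop.comp <|
    Real.tendsto_log_atTop.comp tendsto_natCast_atTop_atTop).atTop_div_const two_pos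

end RSC
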